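/- Let 𝒞 be a category and let C be an object equipped with a binary product cone (p₁, p₂ : C → C) exhibiting C as the product of C with C. For f, g : C → C, let f × g : C → C denote the unique morphism with p₁ ∘ (f × g) = f ∘ p₁ and p₂ ∘ (f × g) = g ∘ p₂. If f, g, h : C → C are morphisms such that (f × g) × h = f × (g × h), then f × g = f. -/

import Mathlib

open CategoryTheory CategoryTheory.Limits

universe u v

theorem isSplitEpi_binaryFan_fst_of_isLimit {𝒞 : Type u} [Category.{v} 𝒞] {X Y : 𝒞}
    {s : BinaryFan X Y} (hs : IsLimit s) (k : X ⟶ Y) : IsSplitEpi s.fst :=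
  .mk' ⟨BinaryFan.IsLimit.lift hs (𝟙 X) k, BinaryFan.IsLimit.lift_fst hs (𝟙 X) k⟩

theorem stmt16_general {𝒞 : Type u} [Category.{v} 𝒞] {C : 𝒞} (p : C ⟶ C) [Epi p]
    (prod : (C ⟶ C) → (C ⟶ C) → (C ⟶ C))
    (hprod : ∀ f g : C ⟶ C, prod f g ≫ p = p ≫ f)
    {f g h : C ⟶ C} (hassoc : prod (prod f g) h = prod f (prod g h)) :
    prod f g = f := by
  rw [← cancel_epi p]
  calc p ≫ prod f g = prod (prod f g) h ≫ p := (hprod (prod f g) h).symm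
    _ = prod f (prod g h) ≫ p := by rw [hassoc]
    _ = p ≫ f := hprod f (prod g h)

/-- Let `(p₁, p₂ : C ⟶ C)` be a binary product cone exhibiting `C` as the
product of `C` with `C`, and for `f g : C ⟶ C` let `prod f g : C ⟶ C` be the unique
morphism with `p₁ ∘ prod f g = f ∘ p₁` and `p₂ ∘ prod f g = g ∘ p₂` (all four cones in the
iterated products being the same cone `(p₁, p₂)` — Isbell's hidden hypothesis).
If `(f × g) × h = f × (g × h)` then `f × g = f`. -/
theorem stmt16 {𝒞 : Type u} [Category.{v} 𝒞] (C : 𝒞) (p₁ p₂ : C ⟶ C)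
    (hlim : IsLimit (BinaryFan.mk p₁ p₂))
    (prod : (C ⟶ C) → (C ⟶ C) → (C ⟶ C))
    (hprod₁ : ∀ f g : C ⟶ C, prod f g ≫ p₁ = p₁ ≫ f)
    (hprod₂ : ∀ f g : C ⟶ C, prod f g ≫ p₂ = p₂ ≫ g)
    (f g h : C ⟶ C)
    (hassoc : prod (prod f g) h = prod f (prod g h)) :
    prod f g = f := by
  have : IsSplitEpi p₁ := isSplitEpi_binaryFan_fst_of_isLimit hlim (𝟙 C)
  exact stmt16_general p₁ prod hprod₁ hassoc
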